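/- Let K be a number field, L a finite Galois extension of ℚ admitting at least one field embedding of K, and τ a ℚ-automorphism of L. Let p be a rational prime unramified in K, and let v be a maximal ideal of 𝓞_K lying over p with residue degree 1. Let S be a function from the set of field embeddings K → L to ℤ. If the fractional ideals of L given by ∏_σ (σ(v)𝓞_L)^{S(σ)} and ∏_σ ((τ∘σ)(v)𝓞_L)^{S(σ)} (products over all embeddings σ : K → L) are equal, then S(τ∘σ) = S(σ) for every embedding σ : K → L. -/

import Mathlib

/-!
Suppose a proper ideal `P` of `𝓞 L` contains both `σ(v)` and `σ'(v)`, and let `D` be the ideal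
generated by the differences `σ x - σ' x`. As `v` has residue degree one and is unramified over `p`,
`𝓞 K = ℤ + v` and `v = (p) + v ^ 2`. Since `σ` and `σ'` agree on `ℤ`, the Leibniz rule
`σ(xy) - σ'(xy) = σ x (σ y - σ' y) + σ' y (σ x - σ' x)` then shows `D ≤ P * D`, so `D = 0` by
Nakayama's lemma and `σ = σ'`. Hence the ideals `σ(v)𝓞 L`, for distinct `σ`, are pairwise coprime,
and unique factorization makes them multiplicatively independent. Composition with `τ` permutes
them, so the exponents can be compared.
-/

open NumberField

section DifferenceIdeal

variable {A R S : Type*} [CommRing A] [CommRing R] [CommRing S] [Algebra A R] [Algebra A S]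

/-- The ideal of `S` generated by the differences `f x - g x`. It defines the locus where the
morphisms `Spec S → Spec R` induced by `f` and `g` agree, and measures how far `f` is from `g`. -/
def differenceIdeal (f g : R →ₐ[A] S) : Ideal S :=
  Ideal.span (Set.range fun x => f x - g x)

theorem sub_mem_differenceIdeal (f g : R →ₐ[A] S) (x : R) : f x - g x ∈ differenceIdeal f g :=
  Ideal.subset_span ⟨x, rfl⟩

theorem eq_of_differenceIdeal_eq_bot {f g : R →ₐ[A] S} (h : differenceIdeal f g = ⊥) : f = g :=
  AlgHom.ext fun x => sub_eq_zero.1 <| Ideal.mem_bot.1 <| h ▸ sub_mem_differenceIdeal f g x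

theorem map_mul_sub_map_mul_mem {f g : R →ₐ[A] S} {P : Ideal S} {x y : R} (hy : g y ∈ P)
    (hxy : f x * (f y - g y) ∈ P * differenceIdeal f g) :
    f (x * y) - g (x * y) ∈ P * differenceIdeal f g := by
  have leibniz : f (x * y) - g (x * y) = f x * (f y - g y) + g y * (f x - g x) := by
    simp only [map_mul]
    ring
  rw [leibniz]
  exact add_mem hxy (Ideal.mul_mem_mul hy (sub_mem_differenceIdeal f g x))

theorem map_sub_map_mem_of_mem {v : Ideal R} {P : Ideal S} {f g : R →ₐ[A] S}
    (hunr : v ≤ (v.comap (algebraMap A R)).map (algebraMap A R) ⊔ v ^ 2)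
    (hf : v.map f ≤ P) (hg : v.map g ≤ P) {y : R} (hy : y ∈ v) :
    f y - g y ∈ P * differenceIdeal f g := by
  have hfP {x : R} (hx : x ∈ v) : f x ∈ P := hf (Ideal.mem_map_of_mem f hx)
  have hgP {x : R} (hx : x ∈ v) : g x ∈ P := hg (Ideal.mem_map_of_mem g hx)
  let N : Ideal R :=
    { carrier := {x | x ∈ v ∧ f x - g x ∈ P * differenceIdeal f g}
      zero_mem' := by simp
      add_mem' := fun {x y} hx hy => by
        refine ⟨add_mem hx.1 hy.1, ?_⟩
        simpa only [map_add, add_sub_add_comm] using add_mem hx.2 hy.2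
      smul_mem' := fun r x hx =>
        ⟨v.mul_mem_left r hx.1, map_mul_sub_map_mul_mem (hgP hx.1) (Ideal.mul_mem_left _ _ hx.2)⟩ }
  have base_le : (v.comap (algebraMap A R)).map (algebraMap A R) ≤ N :=
    Ideal.map_le_iff_le_comap.2 fun c hc => ⟨hc, by simp⟩
  have sq_le : v ^ 2 ≤ N := by
    rw [pow_two, Ideal.mul_le]
    exact fun x hx y hy => ⟨v.mul_mem_left x hy, map_mul_sub_map_mul_mem (hgP hy)
      (Ideal.mul_mem_mul (hfP hx) (sub_mem_differenceIdeal f g y))⟩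
  exact (hunr.trans (sup_le base_le sq_le) hy).2

theorem differenceIdeal_le_mul {v : Ideal R} {P : Ideal S} {f g : R →ₐ[A] S}
    (hres : Function.Surjective (algebraMap A (R ⧸ v)))
    (hunr : v ≤ (v.comap (algebraMap A R)).map (algebraMap A R) ⊔ v ^ 2)
    (hf : v.map f ≤ P) (hg : v.map g ≤ P) :
    differenceIdeal f g ≤ P * differenceIdeal f g := by
  refine Ideal.span_le.2 (Set.range_subset_iff.2 fun x => ?_)
  obtain ⟨a, ha⟩ := hres (Ideal.Quotient.mk v x)
  have hxa : x - algebraMap A R a ∈ v := Ideal.Quotient.eq.1 ha.symm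
  simpa using map_sub_map_mem_of_mem hunr hf hg hxa

theorem eq_bot_of_le_mul_of_ne_top [IsDomain S] {I P : Ideal S} (hI : I.FG) (hP : P ≠ ⊤)
    (h : I ≤ P * I) : I = ⊥ := by
  obtain ⟨r, hrP, hrI⟩ := Submodule.exists_sub_one_mem_and_smul_eq_zero_of_fg_of_le_smul P I hI h
  have hr : r ≠ 0 := by
    rintro rfl
    exact hP ((Ideal.eq_top_iff_one P).2 (by simpa using hrP))
  exact (Submodule.eq_bot_iff I).2 fun x hx => (mul_eq_zero.1 (hrI x hx)).resolve_left hr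

theorem isCoprime_map_of_ne [IsDomain S] [IsNoetherianRing S] {v : Ideal R}
    (hres : Function.Surjective (algebraMap A (R ⧸ v)))
    (hunr : v ≤ (v.comap (algebraMap A R)).map (algebraMap A R) ⊔ v ^ 2)
    {f g : R →ₐ[A] S} (hfg : f ≠ g) : IsCoprime (v.map f) (v.map g) := by
  rw [Ideal.isCoprime_iff_sup_eq]
  by_contra hP
  exact hfg <| eq_of_differenceIdeal_eq_bot <| eq_bot_of_le_mul_of_ne_top
    (IsNoetherian.noetherian _) hP (differenceIdeal_le_mul hres hunr le_sup_left le_sup_right)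

end DifferenceIdeal

section Dedekind

variable {R : Type*} [CommRing R] [IsDedekindDomain R]

theorem span_singleton_sup_sq_eq {v : Ideal R} [v.IsPrime] (hv : v ≠ ⊥) {x : R} (hx : x ∈ v)
    (hx' : x ∉ v ^ 2) : Ideal.span {x} ⊔ v ^ 2 = v := by
  have hlt : v ^ (1 + 1) < Ideal.span {x} ⊔ v ^ 2 :=
    right_lt_sup.2 fun hle => hx' ((Ideal.span_singleton_le_iff_mem _).1 hle)
  have hle : Ideal.span {x} ⊔ v ^ 2 ≤ v ^ 1 := by
    rw [pow_one]
    exact sup_le ((Ideal.span_singleton_le_iff_mem _).2 hx) (Ideal.pow_le_self two_ne_zero)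
  simpa only [pow_one] using Ideal.eq_prime_pow_of_succ_lt_of_le hv hlt hle

theorem le_map_comap_sup_sq {A : Type*} [CommRing A] [Algebra A R] {v : Ideal R} [v.IsPrime]
    (hv : v ≠ ⊥) {a : A} (ha : algebraMap A R a ∈ v) (ha' : algebraMap A R a ∉ v ^ 2) :
    v ≤ (v.comap (algebraMap A R)).map (algebraMap A R) ⊔ v ^ 2 :=
  calc
    v = Ideal.span {algebraMap A R a} ⊔ v ^ 2 := (span_singleton_sup_sq_eq hv ha ha').symm
    _ ≤ _ := sup_le_sup_right
      ((Ideal.span_singleton_le_iff_mem _).2 (Ideal.mem_map_of_mem _ (Ideal.mem_comap.2 ha))) _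

theorem notMem_sq_of_squarefree_span {v : Ideal R} (hv : v ≠ ⊤) {x : R}
    (hx : Squarefree (Ideal.span {x})) : x ∉ v ^ 2 := fun hmem =>
  hv <| Ideal.isUnit_iff.1 <| hx v <| by
    rwa [← pow_two, Ideal.dvd_span_singleton]

variable (F : Type*) [Field F] [Algebra R F] [IsFractionRing R F]

theorem count_coeIdeal_eq_zero_iff (w : IsDedekindDomain.HeightOneSpectrum R) {I : Ideal R}
    (hI : I ≠ ⊥) :
    FractionalIdeal.count F w (I : FractionalIdeal (nonZeroDivisors R) F) = 0 ↔
      ¬ I ≤ w.asIdeal := by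
  classical
  rw [FractionalIdeal.count_coe F w hI, Nat.cast_eq_zero, ← not_iff_not, not_not, ← ne_eq,
    Associates.count_ne_zero_iff_dvd hI w.irreducible, Ideal.dvd_iff_le]

theorem prod_zpow_coeIdeal_injective {ι : Type*} [Fintype ι] {I : ι → Ideal R}
    (hbot : ∀ i, I i ≠ ⊥) (htop : ∀ i, I i ≠ ⊤)
    (hcop : Pairwise fun i j => IsCoprime (I i) (I j)) :
    Function.Injective fun a : ι → ℤ =>
      ∏ i, (I i : FractionalIdeal (nonZeroDivisors R) F) ^ a i := by
  intro a b hab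
  ext i
  obtain ⟨P, hPmax, hiP⟩ := Ideal.exists_le_maximal _ (htop i)
  let w : IsDedekindDomain.HeightOneSpectrum R :=
    ⟨P, hPmax.isPrime, ne_bot_of_le_ne_bot (hbot i) hiP⟩
  have hother {j : ι} (hji : j ≠ i) : FractionalIdeal.count F w (I j) = 0 := by
    rw [count_coeIdeal_eq_zero_iff F w (hbot j)]
    intro hjP
    exact hPmax.ne_top <| top_le_iff.1 <|
      (Ideal.isCoprime_iff_sup_eq.1 (hcop hji)).ge.trans (sup_le hjP hiP)
  have hcount (c : ι → ℤ) :
      FractionalIdeal.count F w (∏ j, (I j : FractionalIdeal (nonZeroDivisors R) F) ^ c j) =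
        c i * FractionalIdeal.count F w (I i) := by
    rw [FractionalIdeal.count_prod F w _ _ fun j _ =>
        zpow_ne_zero _ (FractionalIdeal.coeIdeal_ne_zero.2 (hbot j)),
      Fintype.sum_eq_single i fun j hj => by rw [FractionalIdeal.count_zpow, hother hj, mul_zero],
      FractionalIdeal.count_zpow]
  have hi : FractionalIdeal.count F w (I i) ≠ 0 :=
    (count_coeIdeal_eq_zero_iff F w (hbot i)).not.2 (not_not.2 hiP)
  have hcount_eq := congrArg (FractionalIdeal.count F w) hab
  simp only [hcount] at hcount_eq
  exact mul_right_cancel₀ hi hcount_eq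

end Dedekind

theorem intCast_surjective_of_prime_card {R : Type*} [Ring R] (h : (Nat.card R).Prime) :
    Function.Surjective (Int.cast : ℤ → R) := by
  have : Fact (Nat.card R).Prime := ⟨h⟩
  have : Finite R := Nat.finite_of_card_ne_zero h.ne_zero
  have : Nontrivial R := Finite.one_lt_card_iff_nontrivial.1 h.one_lt
  intro x
  obtain ⟨n, hn⟩ := mem_zmultiples_of_prime_card (g' := x) rfl (one_ne_zero (α := R))
  exact ⟨n, by simpa using hn⟩

section NumberField

variable {K L : Type*} [Field K] [Field L]

theorem mapRingHom_apply_injective (σ : K →+* L) :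
    Function.Injective (RingOfIntegers.mapRingHom σ) := fun _ _ hxy =>
  RingOfIntegers.ext <| σ.injective congr(($hxy : L))

theorem mapRingHom_isIntegral (σ : K →+* L) : (RingOfIntegers.mapRingHom σ).IsIntegral := by
  refine RingHom.IsIntegral.tower_top (Int.castRingHom (𝓞 K)) _ ?_
  rw [RingHom.eq_intCast' ((RingOfIntegers.mapRingHom σ).comp _)]
  exact Algebra.IsIntegral.isIntegral (R := ℤ)

theorem map_mapRingHom_eq_top_iff (σ : K →+* L) {v : Ideal (𝓞 K)} :
    v.map (RingOfIntegers.mapRingHom σ) = ⊤ ↔ v = ⊤ :=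
  Ideal.map_eq_top_iff _ (mapRingHom_apply_injective σ) (mapRingHom_isIntegral σ)

variable [NumberField K]

theorem mapRingHom_injective : Function.Injective
    (RingOfIntegers.mapRingHom : (K →+* L) → 𝓞 K →+* 𝓞 L) := fun _ _ h =>
  IsLocalization.ringHom_ext (nonZeroDivisors (𝓞 K)) <| RingHom.ext fun x => congr(($h x : L))

theorem ne_bot_of_prime_absNorm {v : Ideal (𝓞 K)} (hv : (Ideal.absNorm v).Prime) : v ≠ ⊥ :=
  mt Ideal.absNorm_eq_zero_iff.2 hv.ne_zero

variable [NumberField L]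

theorem isCoprime_map_mapRingHom {v : Ideal (𝓞 K)} (hv : (Ideal.absNorm v).Prime)
    (hunr : (Ideal.absNorm v : 𝓞 K) ∉ v ^ 2) {σ σ' : K →+* L} (hne : σ ≠ σ') :
    IsCoprime (v.map (RingOfIntegers.mapRingHom σ)) (v.map (RingOfIntegers.mapRingHom σ')) := by
  have : v.IsPrime := Ideal.isPrime_of_irreducible_absNorm hv
  have hres : Function.Surjective (algebraMap ℤ (𝓞 K ⧸ v)) :=
    intCast_surjective_of_prime_card (R := 𝓞 K ⧸ v) hv
  have hsq : v ≤ (v.comap (algebraMap ℤ (𝓞 K))).map (algebraMap ℤ (𝓞 K)) ⊔ v ^ 2 :=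
    le_map_comap_sup_sq (ne_bot_of_prime_absNorm hv) (a := (Ideal.absNorm v : ℤ))
      (by simpa using Ideal.absNorm_mem v) (by simpa using hunr)
  exact isCoprime_map_of_ne (f := (RingOfIntegers.mapRingHom σ).toIntAlgHom)
    (g := (RingOfIntegers.mapRingHom σ').toIntAlgHom) hres hsq
    ((RingHom.toIntAlgHom_injective.comp mapRingHom_injective).ne hne)

theorem prod_zpow_map_mapRingHom_injective {v : Ideal (𝓞 K)} (hv : (Ideal.absNorm v).Prime)
    (hunr : (Ideal.absNorm v : 𝓞 K) ∉ v ^ 2) :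
    Function.Injective fun S : (K →+* L) → ℤ => ∏ σ : K →+* L,
      (Ideal.map (RingOfIntegers.mapRingHom σ) v :
        FractionalIdeal (nonZeroDivisors (𝓞 L)) L) ^ S σ := by
  have hbot : v ≠ ⊥ := ne_bot_of_prime_absNorm hv
  have htop : v ≠ ⊤ := (Ideal.isPrime_of_irreducible_absNorm hv).ne_top
  exact prod_zpow_coeIdeal_injective L
    (fun σ => (Ideal.map_eq_bot_iff_of_injective (mapRingHom_apply_injective σ)).not.2 hbot)
    (fun σ => (map_mapRingHom_eq_top_iff σ).not.2 htop)
    fun _ _ => isCoprime_map_mapRingHom hv hunr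

end NumberField

theorem stmt7_general {K L : Type*} [Field K] [NumberField K] [Field L] [NumberField L]
    (τ : L ≃+* L) {v : Ideal (𝓞 K)} (hv : (Ideal.absNorm v).Prime)
    (hunr : (Ideal.absNorm v : 𝓞 K) ∉ v ^ 2) (S : (K →+* L) → ℤ)
    (h : ∏ σ : K →+* L,
          (Ideal.map (RingOfIntegers.mapRingHom σ) v :
            FractionalIdeal (nonZeroDivisors (𝓞 L)) L) ^ S σ
        = ∏ σ : K →+* L,
          (Ideal.map (RingOfIntegers.mapRingHom ((τ : L →+* L).comp σ)) v :
            FractionalIdeal (nonZeroDivisors (𝓞 L)) L) ^ S σ) (σ : K →+* L) :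
    S ((τ : L →+* L).comp σ) = S σ := by
  have hinj : Function.Injective fun σ : K →+* L => (τ : L →+* L).comp σ :=
    fun _ _ => (RingHom.cancel_left τ.injective).1
  let e : Equiv.Perm (K →+* L) := .ofBijective _ (Finite.injective_iff_bijective.1 hinj)
  have hS : S = S ∘ e.symm := by
    refine prod_zpow_map_mapRingHom_injective hv hunr (h.trans ?_)
    exact Fintype.prod_equiv e _ _ fun σ => by simp [e]
  simpa [e] using congrFun hS (e σ)

/-- Let `K` be a number field, `L` a finite Galois extension of `ℚ` admitting an embedding of
`K`, and `τ` a (`ℚ`-)automorphism of `L`.  Let `p` be a prime unramified in `K` and `v` a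
maximal ideal of `𝓞 K` over `p` of residue degree `1`.  If `∏_σ (σ(v)𝓞 L)^{S(σ)}
= ∏_σ ((τ∘σ)(v)𝓞 L)^{S(σ)}` as fractional ideals of `L`, then `S(τ∘σ) = S(σ)` for every
embedding `σ : K → L`. -/
theorem stmt7 (K L : Type*) [Field K] [NumberField K] [Field L] [NumberField L]
    [IsGalois ℚ L] (hKL : Nonempty (K →+* L)) (τ : L ≃+* L)
    (p : ℕ) (hp : p.Prime)
    (hunr : Squarefree (Ideal.span {(p : 𝓞 K)} : Ideal (𝓞 K)))
    (v : Ideal (𝓞 K)) (hv : v.IsMaximal) (hvp : (p : 𝓞 K) ∈ v)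
    (hdeg : Nat.card (𝓞 K ⧸ v) = p)
    (S : (K →+* L) → ℤ)
    (h : ∏ σ : K →+* L,
          (Ideal.map (RingOfIntegers.mapRingHom σ) v :
            FractionalIdeal (nonZeroDivisors (𝓞 L)) L) ^ S σ
        = ∏ σ : K →+* L,
          (Ideal.map (RingOfIntegers.mapRingHom ((τ : L →+* L).comp σ)) v :
            FractionalIdeal (nonZeroDivisors (𝓞 L)) L) ^ S σ) :
    ∀ σ : K →+* L, S ((τ : L →+* L).comp σ) = S σ := by
  have hnorm : Ideal.absNorm v = p := hdeg
  exact stmt7_general τ (hnorm ▸ hp) (hnorm ▸ notMem_sq_of_squarefree_span hv.ne_top hunr) S h
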